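/- Gronwall-type iteration bound: let C₀ ≥ 1, M₁ ≥ 1 and define T' = min(T₀, 1/(5 C₀⁶ M₁¹⁵)). Suppose nonnegative functions x_n : [0,T') → ℝ satisfy x_n(t) ≤ C₀ M₁³ exp(C₀ ∫₀ᵗ x_{n-1}(τ)⁵ dτ) for all n ≥ 1 and t ∈ [0,T'), and x₀(t) ≤ C₀M₁³(1 - 5C₀⁶M₁¹⁵ t)^{-1/5}. Then for every n ≥ 0 and t ∈ [0,T'): x_n(t) ≤ C₀ M₁³ (1 - 5 C₀⁶ M₁¹⁵ t)^{-1/5}. -/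

import Mathlib

open intervalIntegral

/-!
The function `y t = A * (1 - p * C * A ^ p * t) ^ (-1 / p)` satisfies
`(log y)' = C * y ^ p` and `y 0 = A`, hence is a fixed point of the Picard map sending `f` to
`t ↦ A * exp (C * ∫ τ in 0..t, f τ ^ p)`. This map is monotone on nonnegative functions, so it
sends functions below `y` to functions below `y`.
-/

/-- The solution `y` of the Bernoulli equation `y' = C * y ^ (p + 1)` with `y 0 = A`, which for
positive `p`, `C` and `A` blows up at `t = 1 / (p * C * A ^ p)`. From the blow-up time on, its
values are junk values of `Real.rpow`. -/
noncomputable def bernoulliSolution (p C A t : ℝ) : ℝ :=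
  A * (1 - p * C * A ^ p * t) ^ (-(1 / p))

section Affine

variable {k t : ℝ}

theorem mul_lt_one_of_mem_uIcc_zero (ht : k * t < 1) {τ : ℝ} (hτ : τ ∈ Set.uIcc 0 t) :
    k * τ < 1 := by
  have hmem : k * τ ∈ Set.uIcc (k * 0) (k * t) :=
    Set.image_const_mul_uIcc k 0 t ▸ Set.mem_image_of_mem (k * ·) hτ
  exact hmem.2.trans_lt (by simp [ht])

theorem intervalIntegrable_inv_one_sub_mul (ht : k * t < 1) :
    IntervalIntegrable (fun τ => (1 - k * τ)⁻¹) MeasureTheory.volume 0 t :=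
  ContinuousOn.intervalIntegrable <| ContinuousOn.inv₀ (by fun_prop) fun _ hτ =>
    (sub_pos.mpr (mul_lt_one_of_mem_uIcc_zero ht hτ)).ne'

theorem mul_integral_inv_one_sub_mul (ht : k * t < 1) :
    k * ∫ τ in (0 : ℝ)..t, (1 - k * τ)⁻¹ = -Real.log (1 - k * t) := by
  rw [← smul_eq_mul, smul_integral_comp_sub_mul (fun s => s⁻¹),
    integral_inv_of_pos (sub_pos.mpr ht) (by simp)]
  simp

end Affine

section Bernoulli

variable {p C A t : ℝ}

theorem bernoulliSolution_rpow (hp : p ≠ 0) (hA : 0 ≤ A) (ht : p * C * A ^ p * t < 1) :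
    bernoulliSolution p C A t ^ p = A ^ p * (1 - p * C * A ^ p * t)⁻¹ := by
  have hbase : 0 ≤ 1 - p * C * A ^ p * t := (sub_pos.mpr ht).le
  rw [bernoulliSolution, Real.mul_rpow hA (Real.rpow_nonneg hbase _), ← Real.rpow_mul hbase,
    neg_mul, one_div_mul_cancel hp, Real.rpow_neg_one]

theorem eqOn_bernoulliSolution_rpow (hp : p ≠ 0) (hA : 0 ≤ A) (ht : p * C * A ^ p * t < 1) :
    Set.EqOn (fun τ => bernoulliSolution p C A τ ^ p)
      (fun τ => A ^ p * (1 - p * C * A ^ p * τ)⁻¹) (Set.uIcc 0 t) :=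
  fun _ hτ => bernoulliSolution_rpow hp hA (mul_lt_one_of_mem_uIcc_zero ht hτ)

theorem intervalIntegrable_bernoulliSolution_rpow (hp : p ≠ 0) (hA : 0 ≤ A)
    (ht : p * C * A ^ p * t < 1) :
    IntervalIntegrable (fun τ => bernoulliSolution p C A τ ^ p) MeasureTheory.volume 0 t :=
  ((intervalIntegrable_inv_one_sub_mul ht).const_mul (A ^ p)).congr
    ((eqOn_bernoulliSolution_rpow hp hA ht).symm.mono Set.uIoc_subset_uIcc)

theorem mul_integral_bernoulliSolution_rpow (hp : p ≠ 0) (hA : 0 ≤ A)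
    (ht : p * C * A ^ p * t < 1) :
    C * ∫ τ in (0 : ℝ)..t, bernoulliSolution p C A τ ^ p =
      -(1 / p) * Real.log (1 - p * C * A ^ p * t) := by
  calc C * ∫ τ in (0 : ℝ)..t, bernoulliSolution p C A τ ^ p
      = C * (A ^ p * ∫ τ in (0 : ℝ)..t, (1 - p * C * A ^ p * τ)⁻¹) := by
        rw [integral_congr (eqOn_bernoulliSolution_rpow hp hA ht), integral_const_mul]
    _ = 1 / p * (p * C * A ^ p * ∫ τ in (0 : ℝ)..t, (1 - p * C * A ^ p * τ)⁻¹) := by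
        field_simp
    _ = -(1 / p) * Real.log (1 - p * C * A ^ p * t) := by
        rw [mul_integral_inv_one_sub_mul ht]
        ring

theorem mul_exp_integral_bernoulliSolution_rpow (hp : p ≠ 0) (hA : 0 ≤ A)
    (ht : p * C * A ^ p * t < 1) :
    A * Real.exp (C * ∫ τ in (0 : ℝ)..t, bernoulliSolution p C A τ ^ p) =
      bernoulliSolution p C A t := by
  rw [mul_integral_bernoulliSolution_rpow hp hA ht, bernoulliSolution,
    Real.rpow_def_of_pos (sub_pos.mpr ht), mul_comm (Real.log _)]

theorem mul_exp_integral_rpow_mono {f g : ℝ → ℝ} (hp : 0 ≤ p) (hC : 0 ≤ C) (hA : 0 ≤ A)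
    (ht : 0 ≤ t)
    (hf : IntervalIntegrable (fun τ => f τ ^ p) MeasureTheory.volume 0 t)
    (hg : IntervalIntegrable (fun τ => g τ ^ p) MeasureTheory.volume 0 t)
    (hf_nonneg : ∀ τ ∈ Set.Icc 0 t, 0 ≤ f τ) (hfg : ∀ τ ∈ Set.Icc 0 t, f τ ≤ g τ) :
    A * Real.exp (C * ∫ τ in (0 : ℝ)..t, f τ ^ p) ≤
      A * Real.exp (C * ∫ τ in (0 : ℝ)..t, g τ ^ p) := by
  have hintegral : ∫ τ in (0 : ℝ)..t, f τ ^ p ≤ ∫ τ in (0 : ℝ)..t, g τ ^ p :=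
    integral_mono_on ht hf hg fun τ hτ =>
      Real.rpow_le_rpow (hf_nonneg τ hτ) (hfg τ hτ) hp
  gcongr

end Bernoulli

theorem gronwall_iteration_bound_general {p C A T : ℝ} (hp : 0 < p) (hC : 0 ≤ C) (hA : 0 ≤ A)
    (hT : ∀ t, 0 ≤ t → t < T → p * C * A ^ p * t < 1)
    {x : ℕ → ℝ → ℝ}
    (hnonneg : ∀ n t, 0 ≤ t → t < T → 0 ≤ x n t)
    (hint : ∀ n t, 0 ≤ t → t < T →
      IntervalIntegrable (fun τ => x n τ ^ p) MeasureTheory.volume 0 t)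
    (hrec : ∀ n t, 0 ≤ t → t < T →
      x (n + 1) t ≤ A * Real.exp (C * ∫ τ in (0 : ℝ)..t, x n τ ^ p))
    (hzero : ∀ t, 0 ≤ t → t < T → x 0 t ≤ bernoulliSolution p C A t) :
    ∀ n t, 0 ≤ t → t < T → x n t ≤ bernoulliSolution p C A t := by
  intro n
  induction n with
  | zero => exact hzero
  | succ n ih =>
    intro t ht₀ htT
    have ht := hT t ht₀ htT
    calc x (n + 1) t
        ≤ A * Real.exp (C * ∫ τ in (0 : ℝ)..t, x n τ ^ p) := hrec n t ht₀ htT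
      _ ≤ A * Real.exp (C * ∫ τ in (0 : ℝ)..t, bernoulliSolution p C A τ ^ p) :=
          mul_exp_integral_rpow_mono hp.le hC hA ht₀ (hint n t ht₀ htT)
            (intervalIntegrable_bernoulliSolution_rpow hp.ne' hA ht)
            (fun τ hτ => hnonneg n τ hτ.1 (hτ.2.trans_lt htT))
            (fun τ hτ => ih τ hτ.1 (hτ.2.trans_lt htT))
      _ = bernoulliSolution p C A t := mul_exp_integral_bernoulliSolution_rpow hp.ne' hA ht

/-- Gronwall-type iteration bound. If each iterate satisfies
`x_n(t) ≤ C₀M₁³ exp(C₀ ∫₀ᵗ x_{n-1}(τ)⁵ dτ)` and the zeroth iterate satisfies the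
algebraic bound, then all iterates satisfy
`x_n(t) ≤ C₀M₁³ (1 - 5C₀⁶M₁¹⁵ t)^{-1/5}` on `[0, T')` with
`T' = min(T₀, 1/(5C₀⁶M₁¹⁵))`. -/
theorem gronwall_iteration_bound
    (C₀ M₁ T₀ : ℝ) (hC₀ : 1 ≤ C₀) (hM₁ : 1 ≤ M₁) (hT₀ : 0 < T₀)
    (T' : ℝ) (hT' : T' = min T₀ (1 / (5 * C₀ ^ 6 * M₁ ^ 15)))
    (x : ℕ → ℝ → ℝ)
    (hnonneg : ∀ n t, 0 ≤ t → t < T' → 0 ≤ x n t)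
    (hint : ∀ n t, 0 ≤ t → t < T' →
      IntervalIntegrable (fun τ => x n τ ^ 5) MeasureTheory.volume 0 t)
    (hrec : ∀ n t, 0 ≤ t → t < T' →
      x (n + 1) t ≤ C₀ * M₁ ^ 3 * Real.exp (C₀ * ∫ τ in (0 : ℝ)..t, x n τ ^ 5))
    (hzero : ∀ t, 0 ≤ t → t < T' →
      x 0 t ≤ C₀ * M₁ ^ 3 * (1 - 5 * C₀ ^ 6 * M₁ ^ 15 * t) ^ (-(1 / 5 : ℝ))) :
    ∀ n t, 0 ≤ t → t < T' →
      x n t ≤ C₀ * M₁ ^ 3 * (1 - 5 * C₀ ^ 6 * M₁ ^ 15 * t) ^ (-(1 / 5 : ℝ)) := by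
  have hrate : 5 * C₀ * (C₀ * M₁ ^ 3) ^ (5 : ℝ) = 5 * C₀ ^ 6 * M₁ ^ 15 := by
    rw [Real.rpow_ofNat]
    ring
  have hlife : ∀ t, 0 ≤ t → t < T' → 5 * C₀ * (C₀ * M₁ ^ 3) ^ (5 : ℝ) * t < 1 := by
    intro t _ ht
    rw [hrate, ← lt_div_iff₀' (by positivity)]
    exact ht.trans_le (hT' ▸ min_le_right _ _)
  simpa only [bernoulliSolution, hrate] using
    gronwall_iteration_bound_general (by norm_num) (by positivity) (by positivity) hlife hnonneg
      (by simpa only [Real.rpow_ofNat] using hint) (by simpa only [Real.rpow_ofNat] using hrec)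
      (by simpa only [bernoulliSolution, hrate] using hzero)
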